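/- arXiv:1307.1721 — 10 statements merged into one kernel-verified Lean document; each statement's English description precedes it below -/
import Mathlib

section
/- Fortuin–Kasteleyn representation of the Potts model: Let V and E be finite types and let ε : E → Sym2 V assign to each edge an unordered pair of endpoints, so that (V, E, ε) is a finite multigraph (loops and multiple edges allowed). Let R be a commutative ring, let v : E → R be edge weights, and let q be a natural number. For a finite subset A ⊆ E, let k(A) denote the number of connected components of the simple graph on V whose edge set is the image of A under ε (isolated vertices counting as components). Then ∑_{σ : V → Fin q} ∏_{e ∈ E} (1 + v_e · [σ takes equal values on the two endpoints of e]) = ∑_{A ⊆ E} q^{k(A)} · ∏_{e ∈ A} v_e, where [·] equals 1 if the condition holds and 0 otherwise (for a loop the condition always holds). -/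
/-! Expanding the product over edges turns the Potts partition function into a sum over pairs
`(A, σ)` of an edge set and a colouring, weighted by `∏ e ∈ A, v e` if `σ` takes equal values on
the endpoints of every edge in `A`, and by `0` otherwise. After exchanging the two sums, it
remains to count, for fixed `A`, the colourings that are constant along every edge of `A`. By
`locallyConstantEquiv` these are exactly the functions on the connected components of the graph
generated by `A`, so there are `q ^ k(A)` of them. -/

/-- A function that takes equal values on adjacent vertices of `G` is the same thing as a function
on the connected components of `G`. -/
def locallyConstantEquiv {V : Type*} (G : SimpleGraph V) (α : Type*) :
    {σ : V → α // ∀ a b, G.Adj a b → σ a = σ b} ≃ (G.ConnectedComponent → α) where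
  toFun σ := fun C => C.lift σ.1 fun a b p _ => by
    induction p with
    | nil => rfl
    | cons h _ ih => exact (σ.2 _ _ h).trans (ih (by simp_all))
  invFun f := ⟨fun a => f (G.connectedComponentMk a), fun _ _ h =>
    congrArg f (SimpleGraph.ConnectedComponent.sound h.reachable)⟩
  left_inv _ := rfl
  right_inv f := by
    funext C
    induction C using SimpleGraph.ConnectedComponent.ind
    rfl

/-- Passing to the simple graph discards loops and multiplicities, which impose no further
constraint on a colouring. -/
theorem forall_isDiag_iff {V E α : Type*} (ε : E → Sym2 V) (A : Finset E) (σ : V → α) :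
    (∀ e ∈ A, ((ε e).map σ).IsDiag) ↔
      ∀ a b, (SimpleGraph.fromEdgeSet (ε '' (A : Set E))).Adj a b → σ a = σ b := by
  constructor
  · intro h a b hab
    obtain ⟨⟨e, he, hε⟩, -⟩ := (SimpleGraph.fromEdgeSet_adj _).1 hab
    simpa [hε] using h e he
  · intro h e he
    induction hε : ε e with
    | h a b =>
      by_cases hab : a = b
      · simp [hab]
      · simpa using h a b ((SimpleGraph.fromEdgeSet_adj _).2 ⟨⟨e, he, hε⟩, hab⟩)


/-- **Fortuin–Kasteleyn representation of the Potts model.**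
For a finite multigraph given by finite vertex and edge types `V`, `E` with
endpoint map `ε : E → Sym2 V`, edge weights `v : E → R` in a commutative ring,
and a natural number `q`, the `q`-state Potts partition function equals the
multivariate Tutte polynomial, where `k(A)` is the number of connected
components of the simple graph on `V` generated by the endpoint pairs of the
edges in `A`. -/
theorem potts_fortuin_kasteleyn (V E R : Type*) [Fintype V] [Fintype E]
    [DecidableEq V] [CommRing R] (ε : E → Sym2 V) (v : E → R) (q : ℕ) :
    ∑ σ : V → Fin q, ∏ e : E,
        (1 + v e * (if ((ε e).map σ).IsDiag then 1 else 0)) =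
    ∑ A : Finset E,
        (q : R) ^ Nat.card
            (SimpleGraph.fromEdgeSet (ε '' (A : Set E))).ConnectedComponent *
          ∏ e ∈ A, v e := by
  classical
  simp only [Finset.prod_one_add, Finset.powerset_univ]
  rw [Finset.sum_comm]
  refine Finset.sum_congr rfl fun A _ => ?_
  have card_eq : (Finset.univ.filter fun σ : V → Fin q =>
      ∀ e ∈ A, ((ε e).map σ).IsDiag).card =
      q ^ Nat.card (SimpleGraph.fromEdgeSet (ε '' (A : Set E))).ConnectedComponent := by
    simp only [forall_isDiag_iff]
    rw [← Fintype.card_subtype, ← Nat.card_eq_fintype_card,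
      Nat.card_congr (locallyConstantEquiv _ _), Nat.card_fun, Nat.card_fin]
  simp only [Finset.prod_mul_distrib, Finset.prod_ite_zero, Finset.prod_const_one]
  rw [← Finset.mul_sum, Finset.sum_boole, card_eq, Nat.cast_pow, mul_comm]
end

section
/- Conjugacy of the parallel-composition function to multiplication: Let A, B, α, β, x, y be complex numbers with α + β = A and α·β = −B. Define G(u, w) = (u + w + A·u·w)/(1 + B·u·w) and f(u) = (1 + α·u)/(1 + β·u). If 1 + B·x·y ≠ 0, 1 + β·x ≠ 0, and 1 + β·y ≠ 0, then 1 + β·G(x,y) ≠ 0 and f(G(x,y)) = f(x)·f(y). -/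
/-- For a root `γ` of `T² − A·T − B`, the affine map `u ↦ 1 + γ·u` is multiplicative along `G` up to
the denominator of `G u w = (u + w + A·u·w)/(1 + B·u·w)`. That factor does not depend on the
root, so it cancels in the quotient of the identities for `α` and `β`. -/
theorem one_add_root_mul_composition (A B γ x y : ℂ) (hγ : γ ^ 2 = A * γ + B)
    (hxy : 1 + B * x * y ≠ 0) :
    1 + γ * ((x + y + A * x * y) / (1 + B * x * y))
      = (1 + γ * x) * (1 + γ * y) / (1 + B * x * y) := by
  rw [eq_div_iff hxy, add_mul, mul_assoc γ, div_mul_cancel₀ _ hxy]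
  linear_combination (-(x * y)) * hγ

/-- **Conjugacy of the parallel-composition function to multiplication.**
If `α + β = A` and `α·β = −B`, then the Möbius map `f u = (1 + α·u)/(1 + β·u)`
conjugates `G u w = (u + w + A·u·w)/(1 + B·u·w)` to multiplication:
`f (G x y) = f x · f y`, and moreover `1 + β·G(x,y) ≠ 0`. -/
theorem parallel_composition_conjugate_mul (A B α β x y : ℂ)
    (hsum : α + β = A) (hprod : α * β = -B)
    (hxy : 1 + B * x * y ≠ 0) (hx : 1 + β * x ≠ 0) (hy : 1 + β * y ≠ 0) :
    1 + β * ((x + y + A * x * y) / (1 + B * x * y)) ≠ 0 ∧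
    (1 + α * ((x + y + A * x * y) / (1 + B * x * y)))
        / (1 + β * ((x + y + A * x * y) / (1 + B * x * y)))
      = ((1 + α * x) / (1 + β * x)) * ((1 + α * y) / (1 + β * y)) := by
  have hα : α ^ 2 = A * α + B := by linear_combination α * hsum - hprod
  have hβ : β ^ 2 = A * β + B := by linear_combination β * hsum - hprod
  rw [one_add_root_mul_composition A B α x y hα hxy,
    one_add_root_mul_composition A B β x y hβ hxy]
  refine ⟨div_ne_zero (mul_ne_zero hx hy) hxy, ?_⟩
  rw [div_div_div_cancel_right₀ hxy, div_mul_div_comm]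
end

section
/- Explicit formula for the iterated Möbius recursion: Let ρ and r₁ be real numbers with ρ ≠ 0 and ρ ≠ 1. For each natural number k define Nₖ = ρ·((1 + r₁/ρ)^k − (1 + r₁)^k) and Dₖ = (1 + r₁)^k − ρ·(1 + r₁/ρ)^k, and set rₖ = Nₖ/Dₖ. Then D₁ = 1 − ρ ≠ 0 and r₁ (computed from the formula with k = 1) equals r₁; and for every k, if Dₖ ≠ 0 and D_{k+1} ≠ 0, then 1 − ρ⁻¹·r₁·rₖ ≠ 0 and r_{k+1} = ((1 + (ρ⁻¹ + 1)·r₁)·rₖ + r₁)/(1 − ρ⁻¹·r₁·rₖ). In other words, the sequence rₖ = ρ·((1+r₁/ρ)^k − (1+r₁)^k)/((1+r₁)^k − ρ·(1+r₁/ρ)^k) satisfies the recursion r_{k+1} = ((1 + (ρ⁻¹+1)r₁)·rₖ + r₁)/(1 − ρ⁻¹·r₁·rₖ) wherever the denominators are nonzero. -/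
/-!
Write `Nₖ`, `Dₖ` for the numerator and denominator. The vector `(Nₖ, Dₖ)` is a combination of
`(1 + r₁/ρ)^k • (ρ, -ρ)` and `(1 + r₁)^k • (-ρ, 1)`, where `(ρ, -ρ)` and `(-ρ, 1)` are eigenvectors
of the Möbius matrix `[[1 + (ρ⁻¹ + 1) r₁, r₁], [-ρ⁻¹ r₁, 1]]` for the eigenvalues `1 + r₁/ρ` and
`1 + r₁`. Hence the matrix sends `(Nₖ, Dₖ)` to `(Nₖ₊₁, Dₖ₊₁)` (`mobiusNum_succ`, `mobiusDen_succ`),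
and dividing both coordinates by `Dₖ` gives the recursion for `rₖ = Nₖ / Dₖ`.
-/

/-- Numerator of the explicit formula for the iterated Möbius recursion. -/
noncomputable def mobiusNum (ρ r₁ : ℝ) (k : ℕ) : ℝ :=
  ρ * ((1 + r₁ / ρ) ^ k - (1 + r₁) ^ k)

/-- Denominator of the explicit formula for the iterated Möbius recursion. -/
noncomputable def mobiusDen (ρ r₁ : ℝ) (k : ℕ) : ℝ :=
  (1 + r₁) ^ k - ρ * (1 + r₁ / ρ) ^ k

/-- The explicit sequence `rₖ = Nₖ / Dₖ`. -/
noncomputable def mobiusSeq (ρ r₁ : ℝ) (k : ℕ) : ℝ :=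
  mobiusNum ρ r₁ k / mobiusDen ρ r₁ k

/-- First row of the Möbius matrix applied to `(Nₖ, Dₖ)`. -/
theorem mobiusNum_succ (ρ r₁ : ℝ) (hρ0 : ρ ≠ 0) (k : ℕ) :
    mobiusNum ρ r₁ (k + 1)
      = (1 + (ρ⁻¹ + 1) * r₁) * mobiusNum ρ r₁ k + r₁ * mobiusDen ρ r₁ k := by
  unfold mobiusNum mobiusDen
  rw [pow_succ, pow_succ]
  generalize (1 + r₁ / ρ) ^ k = a
  generalize (1 + r₁) ^ k = b
  field_simp
  ring

/-- Second row of the Möbius matrix applied to `(Nₖ, Dₖ)`. -/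
theorem mobiusDen_succ (ρ r₁ : ℝ) (hρ0 : ρ ≠ 0) (k : ℕ) :
    mobiusDen ρ r₁ (k + 1) = mobiusDen ρ r₁ k - ρ⁻¹ * r₁ * mobiusNum ρ r₁ k := by
  unfold mobiusNum mobiusDen
  rw [pow_succ, pow_succ]
  generalize (1 + r₁ / ρ) ^ k = a
  generalize (1 + r₁) ^ k = b
  field_simp
  ring

/-- **Explicit formula for the iterated Möbius recursion.**
The sequence `rₖ = ρ·((1+r₁/ρ)^k − (1+r₁)^k)/((1+r₁)^k − ρ·(1+r₁/ρ)^k)`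
starts at `r₁` (its `k = 1` value is `r₁`, with denominator `D₁ = 1 − ρ ≠ 0`)
and satisfies the recursion
`r_{k+1} = ((1 + (ρ⁻¹+1)r₁)·rₖ + r₁)/(1 − ρ⁻¹·r₁·rₖ)`
wherever the denominators `Dₖ`, `D_{k+1}` are nonzero (and then
`1 − ρ⁻¹·r₁·rₖ ≠ 0` automatically). -/
theorem mobiusSeq_formula (ρ r₁ : ℝ) (hρ0 : ρ ≠ 0) (hρ1 : ρ ≠ 1) :
    mobiusDen ρ r₁ 1 = 1 - ρ ∧
    mobiusDen ρ r₁ 1 ≠ 0 ∧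
    mobiusSeq ρ r₁ 1 = r₁ ∧
    ∀ k : ℕ, mobiusDen ρ r₁ k ≠ 0 → mobiusDen ρ r₁ (k + 1) ≠ 0 →
      1 - ρ⁻¹ * r₁ * mobiusSeq ρ r₁ k ≠ 0 ∧
      mobiusSeq ρ r₁ (k + 1)
        = ((1 + (ρ⁻¹ + 1) * r₁) * mobiusSeq ρ r₁ k + r₁)
            / (1 - ρ⁻¹ * r₁ * mobiusSeq ρ r₁ k) := by
  have hD1 : mobiusDen ρ r₁ 1 = 1 - ρ := by
    unfold mobiusDen
    field_simp
    ring
  have hne : (1 : ℝ) - ρ ≠ 0 := sub_ne_zero.mpr hρ1.symm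
  refine ⟨hD1, hD1 ▸ hne, ?_, fun k hk hk1 => ?_⟩
  · have hN1 : mobiusNum ρ r₁ 1 = r₁ * (1 - ρ) := by
      unfold mobiusNum
      field_simp
      ring
    rw [mobiusSeq, hD1, hN1, mul_div_cancel_right₀ _ hne]
  · have hden : 1 - ρ⁻¹ * r₁ * mobiusSeq ρ r₁ k
        = mobiusDen ρ r₁ (k + 1) / mobiusDen ρ r₁ k := by
      rw [mobiusDen_succ ρ r₁ hρ0, sub_div, div_self hk, mul_div_assoc, mobiusSeq]
    have hnum : (1 + (ρ⁻¹ + 1) * r₁) * mobiusSeq ρ r₁ k + r₁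
        = mobiusNum ρ r₁ (k + 1) / mobiusDen ρ r₁ k := by
      rw [mobiusNum_succ ρ r₁ hρ0, add_div, mul_div_cancel_right₀ _ hk, mul_div_assoc, mobiusSeq]
    rw [hden, hnum, div_div_div_cancel_right₀ hk]
    exact ⟨div_ne_zero hk1 hk, rfl⟩
end

section
/- Existence, uniqueness, and characterization of ρ*_Λ: For every real number Λ > 2 there exists a unique ρ*_Λ ∈ (0,1) satisfying (1 + ρ*_Λ)^Λ = 2·(1 + (ρ*_Λ)²)^{Λ−1}. Moreover, for every ρ ∈ (0,1), the inequality (1 + ρ)^Λ ≤ 2·(1 + ρ²)^{Λ−1} holds if and only if ρ ≤ ρ*_Λ. -/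
/-!
Taking logarithms turns the comparison into one between
`f ρ = Λ log (1 + ρ) - (Λ - 1) log (1 + ρ²)` and `log 2` (`rpow_le_iff`, `rpow_eq_iff`).
The function `f` is strictly concave on `[0, 1]` (`strictConcaveOn_logGap`), with `f 0 = 0` and
`f 1 = log 2`. Since `f' 1 = 1 - Λ / 2 < 0`, it exceeds `log 2` just to the left of `1`, so the
intermediate value theorem gives `ρs ∈ (0, 1)` with `f ρs = log 2`. Strict concavity together with
`f ρs = f 1` forces `f > log 2` on `(ρs, 1)` and `f < log 2` on `(0, ρs)`, which gives both
uniqueness and the characterization by the inequality.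
-/

/-- The logarithm of `(1 + ρ) ^ Λ / (1 + ρ ^ 2) ^ (Λ - 1)`, as a function of `ρ`. -/
noncomputable def logGap (Λ ρ : ℝ) : ℝ :=
  Λ * Real.log (1 + ρ) - (Λ - 1) * Real.log (1 + ρ ^ 2)

lemma log_lhs (Λ : ℝ) {ρ : ℝ} (hρ : 0 < ρ) :
    Real.log ((1 + ρ) ^ Λ) = Λ * Real.log (1 + ρ) :=
  Real.log_rpow (by linarith) _

lemma log_rhs (Λ ρ : ℝ) :
    Real.log (2 * (1 + ρ ^ 2) ^ (Λ - 1)) = Real.log 2 + (Λ - 1) * Real.log (1 + ρ ^ 2) := by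
  have h : 0 < 1 + ρ ^ 2 := by positivity
  rw [Real.log_mul two_ne_zero (by positivity), Real.log_rpow h]

lemma rpow_le_iff (Λ : ℝ) {ρ : ℝ} (hρ : 0 < ρ) :
    (1 + ρ) ^ Λ ≤ 2 * (1 + ρ ^ 2) ^ (Λ - 1) ↔ logGap Λ ρ ≤ Real.log 2 := by
  rw [← Real.log_le_log_iff (by positivity) (by positivity), log_lhs Λ hρ, log_rhs, logGap,
    sub_le_iff_le_add]

lemma rpow_eq_iff (Λ : ℝ) {ρ : ℝ} (hρ : 0 < ρ) :
    (1 + ρ) ^ Λ = 2 * (1 + ρ ^ 2) ^ (Λ - 1) ↔ logGap Λ ρ = Real.log 2 := by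
  have h1 : 0 < (1 + ρ) ^ Λ := by positivity
  have h2 : 0 < 2 * (1 + ρ ^ 2) ^ (Λ - 1) := by positivity
  rw [← Real.log_injOn_pos.eq_iff h1 h2, log_lhs Λ hρ, log_rhs, logGap, sub_eq_iff_eq_add]

lemma hasDerivAt_logGap (Λ : ℝ) {ρ : ℝ} (hρ : 0 ≤ ρ) :
    HasDerivAt (logGap Λ) (Λ * (1 / (1 + ρ)) - (Λ - 1) * (2 * ρ / (1 + ρ ^ 2))) ρ := by
  have h1 : HasDerivAt (fun x : ℝ => 1 + x) 1 ρ := (hasDerivAt_id ρ).const_add 1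
  have h2 : HasDerivAt (fun x : ℝ => 1 + x ^ 2) (2 * ρ) ρ := by
    simpa using (hasDerivAt_pow 2 ρ).const_add 1
  exact ((h1.log (by positivity)).const_mul Λ).sub ((h2.log (by positivity)).const_mul (Λ - 1))

lemma continuousOn_logGap (Λ : ℝ) : ContinuousOn (logGap Λ) (Set.Icc 0 1) :=
  fun _ hx => (hasDerivAt_logGap Λ hx.1).continuousAt.continuousWithinAt

/-- In the derivative, `1 / (1 + ρ)` is strictly decreasing and `2ρ / (1 + ρ²)` is increasing
on `(0, 1)`. -/
lemma strictConcaveOn_logGap {Λ : ℝ} (hΛ : 2 < Λ) :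
    StrictConcaveOn ℝ (Set.Icc 0 1) (logGap Λ) := by
  refine StrictAntiOn.strictConcaveOn_of_deriv (convex_Icc 0 1) (continuousOn_logGap Λ) ?_
  rw [interior_Icc]
  rintro x ⟨hx0, hx1⟩ y ⟨hy0, hy1⟩ hxy
  rw [(hasDerivAt_logGap Λ hx0.le).deriv, (hasDerivAt_logGap Λ hy0.le).deriv]
  have h1 : 1 / (1 + y) < 1 / (1 + x) := by gcongr
  have h2 : 2 * x / (1 + x ^ 2) ≤ 2 * y / (1 + y ^ 2) := by
    rw [div_le_div_iff₀ (by positivity) (by positivity)]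
    -- The difference of the two sides is `2 (y - x) (1 - x y)`.
    have hxy1 : x * y < 1 := by nlinarith
    nlinarith [mul_pos (sub_pos.2 hxy) (sub_pos.2 hxy1)]
  have h3 : Λ * (1 / (1 + y)) < Λ * (1 / (1 + x)) := by gcongr
  have h4 : (Λ - 1) * (2 * x / (1 + x ^ 2)) ≤ (Λ - 1) * (2 * y / (1 + y ^ 2)) :=
    mul_le_mul_of_nonneg_left h2 (by linarith)
  linarith

lemma logGap_zero (Λ : ℝ) : logGap Λ 0 = 0 := by simp [logGap]

lemma logGap_one (Λ : ℝ) : logGap Λ 1 = Real.log 2 := by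
  norm_num [logGap]
  ring

/-- The derivative of `logGap Λ` at `1` is `1 - Λ / 2 < 0`. -/
lemma exists_log_two_lt_logGap {Λ : ℝ} (hΛ : 2 < Λ) :
    ∃ c ∈ Set.Ioo (0 : ℝ) 1, Real.log 2 < logGap Λ c := by
  have hd := (hasDerivAt_logGap Λ zero_le_one).hasDerivWithinAt (s := Set.Iio 1)
  rw [hasDerivWithinAt_iff_tendsto_slope' (by simp)] at hd
  have hneg : Λ * (1 / (1 + 1)) - (Λ - 1) * (2 * 1 / (1 + 1 ^ 2)) < 0 := by linarith
  obtain ⟨c, hslope, hc⟩ := ((hd.eventually (gt_mem_nhds hneg)).and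
    (Ioo_mem_nhdsLT (zero_lt_one' ℝ))).exists
  refine ⟨c, hc, ?_⟩
  rw [slope_def_field, logGap_one] at hslope
  by_contra! h
  exact hslope.not_ge (div_nonneg_of_nonpos (by linarith) (by linarith [hc.2]))

/-- **Existence, uniqueness, and characterization of `ρ*_Λ`.**
For every real `Λ > 2` there is a unique `ρ*_Λ ∈ (0,1)` with
`(1+ρ*_Λ)^Λ = 2(1+(ρ*_Λ)²)^{Λ−1}`, and for every `ρ ∈ (0,1)` one has
`(1+ρ)^Λ ≤ 2(1+ρ²)^{Λ−1}` if and only if `ρ ≤ ρ*_Λ`. -/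
theorem rhoStar_exists_unique (Λ : ℝ) (hΛ : 2 < Λ) :
    ∃ ρs : ℝ, ρs ∈ Set.Ioo (0 : ℝ) 1 ∧
      (1 + ρs) ^ Λ = 2 * (1 + ρs ^ 2) ^ (Λ - 1) ∧
      (∀ ρ ∈ Set.Ioo (0 : ℝ) 1,
        (1 + ρ) ^ Λ = 2 * (1 + ρ ^ 2) ^ (Λ - 1) → ρ = ρs) ∧
      (∀ ρ ∈ Set.Ioo (0 : ℝ) 1,
        ((1 + ρ) ^ Λ ≤ 2 * (1 + ρ ^ 2) ^ (Λ - 1) ↔ ρ ≤ ρs)) := by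
  obtain ⟨c, hc, hfc⟩ := exists_log_two_lt_logGap hΛ
  obtain ⟨s, hs, hfs⟩ : Real.log 2 ∈ logGap Λ '' Set.Ioo 0 c :=
    intermediate_value_Ioo hc.1.le
      ((continuousOn_logGap Λ).mono (Set.Icc_subset_Icc_right hc.2.le))
      ⟨by rw [logGap_zero]; exact Real.log_pos one_lt_two, hfc⟩
  have hs1 : s < 1 := hs.2.trans hc.2
  -- A point of `(0, 1)` strictly between `a` and `1` lies above the chord of `logGap Λ` over
  -- `[a, 1]`.
  have key : ∀ a b : ℝ, 0 < a → a < b → b < 1 → Real.log 2 ≤ logGap Λ a →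
      Real.log 2 < logGap Λ b := by
    intro a b ha hab hb hfa
    have h := (strictConcaveOn_logGap hΛ).lt_on_openSegment
      (x := a) (y := 1) (z := b) ⟨ha.le, (hab.trans hb).le⟩ ⟨zero_le_one, le_rfl⟩
      (hab.trans hb).ne (by rw [openSegment_eq_Ioo (hab.trans hb)]; exact ⟨hab, hb⟩)
    rwa [logGap_one, min_eq_right hfa] at h
  have above : ∀ ρ, s < ρ → ρ < 1 → Real.log 2 < logGap Λ ρ :=
    fun ρ h h1 => key s ρ hs.1 h h1 hfs.ge
  have below : ∀ ρ, 0 < ρ → ρ < s → logGap Λ ρ < Real.log 2 := by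
    intro ρ h0 h
    by_contra! hge
    exact (key ρ s h0 h hs1 hge).ne' hfs
  refine ⟨s, ⟨hs.1, hs1⟩, (rpow_eq_iff Λ hs.1).2 hfs, fun ρ hρ h => ?_, fun ρ hρ => ?_⟩
  · rw [rpow_eq_iff Λ hρ.1] at h
    rcases lt_trichotomy ρ s with hlt | heq | hgt
    · exact absurd h (below ρ hρ.1 hlt).ne
    · exact heq
    · exact absurd h (above ρ hgt hρ.2).ne'
  · rw [rpow_le_iff Λ hρ.1]
    constructor
    · intro h
      by_contra! hgt
      exact (above ρ hgt hρ.2).not_ge h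
    · intro h
      rcases h.lt_or_eq with hlt | rfl
      · exact (below ρ hρ.1 hlt).le
      · exact hfs.le
end

section
/- Concrete radius sequence criterion: Let Λ ≥ 2 be an integer and let ρ ∈ (0,1). Set X = (2/(1+ρ))^{1/(Λ−1)} and, for 1 ≤ k ≤ Λ−1, set r_k = ρ·(X^k − 1)/(1 − ρ·X^k). Then 1 − ρ·X^k > 0 for all 1 ≤ k ≤ Λ−1 (so each r_k is well defined), r_{Λ−1} = ρ, the sequence r₁ ≤ r₂ ≤ ⋯ ≤ r_{Λ−1} is nondecreasing, and the following are equivalent: (i) ρ² ≤ r_k ≤ ρ for all 1 ≤ k ≤ Λ−1; (ii) (1 + ρ)^Λ ≤ 2·(1 + ρ²)^{Λ−1}. -/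
/-!
Put `n = Λ - 1`, so that `X ^ n = 2 / (1 + ρ)` and `X ≥ 1`. The Möbius map
`t ↦ ρ (t - 1) / (1 - ρ t)` is increasing on `t < 1 / ρ` because its determinant is proportional
to `1 - ρ > 0`, and the powers `X ^ k` with `k ≤ n` increase up to `2 / (1 + ρ) < 1 / ρ`, a point
which the map sends to `ρ`. Hence `r` is nondecreasing with last value `ρ`, and the bounds
`ρ² ≤ r_k ≤ ρ` all reduce to `ρ² ≤ r_1`. Clearing denominators, this says
`1 + ρ ≤ X (1 + ρ²)`, and taking `n`-th powers gives the polynomial criterion.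
-/

theorem radius_map_mono {ρ a b : ℝ} (hρ0 : 0 < ρ) (hρ1 : ρ < 1) (hab : a ≤ b)
    (hb : 0 < 1 - ρ * b) :
    ρ * (a - 1) / (1 - ρ * a) ≤ ρ * (b - 1) / (1 - ρ * b) := by
  have ha : 0 < 1 - ρ * a := by nlinarith
  rw [div_le_div_iff₀ ha hb]
  have h : 0 ≤ ρ * ((b - a) * (1 - ρ)) :=
    mul_nonneg hρ0.le (mul_nonneg (by linarith) (by linarith))
  nlinarith

theorem sq_le_radius_map_iff {ρ t : ℝ} (hρ0 : 0 < ρ) (ht : 0 < 1 - ρ * t) :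
    ρ ^ 2 ≤ ρ * (t - 1) / (1 - ρ * t) ↔ 1 + ρ ≤ t * (1 + ρ ^ 2) := by
  rw [le_div_iff₀ ht, pow_two, mul_assoc, mul_le_mul_iff_right₀ hρ0]
  constructor <;> intro h <;> nlinarith

/-- **Concrete radius sequence criterion.**
For an integer `Λ ≥ 2` and `ρ ∈ (0,1)`, set `X = (2/(1+ρ))^{1/(Λ−1)}` and
`r_k = ρ(X^k − 1)/(1 − ρX^k)`.  Then `1 − ρX^k > 0` for `1 ≤ k ≤ Λ−1`,
`r_{Λ−1} = ρ`, the sequence is nondecreasing on `1,…,Λ−1`, and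
`ρ² ≤ r_k ≤ ρ` holds for all `1 ≤ k ≤ Λ−1` if and only if
`(1+ρ)^Λ ≤ 2(1+ρ²)^{Λ−1}`. -/
theorem radius_sequence_criterion (Λ : ℕ) (hΛ : 2 ≤ Λ)
    (ρ : ℝ) (hρ0 : 0 < ρ) (hρ1 : ρ < 1)
    (X : ℝ) (hX : X = (2 / (1 + ρ)) ^ ((1 : ℝ) / ((Λ : ℝ) - 1)))
    (r : ℕ → ℝ) (hr : ∀ k : ℕ, r k = ρ * (X ^ k - 1) / (1 - ρ * X ^ k)) :
    (∀ k : ℕ, 1 ≤ k → k ≤ Λ - 1 → 0 < 1 - ρ * X ^ k) ∧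
    r (Λ - 1) = ρ ∧
    (∀ k : ℕ, 1 ≤ k → k + 1 ≤ Λ - 1 → r k ≤ r (k + 1)) ∧
    ((∀ k : ℕ, 1 ≤ k → k ≤ Λ - 1 → ρ ^ 2 ≤ r k ∧ r k ≤ ρ) ↔
      (1 + ρ) ^ Λ ≤ 2 * (1 + ρ ^ 2) ^ (Λ - 1)) := by
  obtain ⟨n, rfl⟩ : ∃ n, Λ = n + 1 := ⟨Λ - 1, by omega⟩
  have hn : 1 ≤ n := by omega
  simp only [Nat.add_sub_cancel]
  have hp : 0 < 1 + ρ := by linarith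
  have hbase : 1 ≤ 2 / (1 + ρ) := by rw [le_div_iff₀ hp]; linarith
  have hXn : X ^ n = 2 / (1 + ρ) := by
    have he : (1 : ℝ) / (((n + 1 : ℕ) : ℝ) - 1) = (n : ℝ)⁻¹ := by push_cast; simp
    rw [hX, he]
    exact Real.rpow_inv_natCast_pow (by linarith) (by omega)
  have hX1 : 1 ≤ X := by
    rw [hX]
    refine Real.one_le_rpow hbase (div_nonneg zero_le_one ?_)
    push_cast
    simp
  have hlast : 0 < 1 - ρ * X ^ n := by
    have h : 1 - ρ * X ^ n = (1 - ρ) / (1 + ρ) := by rw [hXn]; field_simp; ring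
    rw [h]
    exact div_pos (by linarith) hp
  have hpos : ∀ k : ℕ, k ≤ n → 0 < 1 - ρ * X ^ k := fun k hk => by
    have h := mul_le_mul_of_nonneg_left (pow_le_pow_right₀ hX1 hk) hρ0.le
    linarith
  have hrn : r n = ρ := by
    rw [hr, div_eq_iff hlast.ne', hXn]
    field_simp
    ring
  have hmono : ∀ k m : ℕ, k ≤ m → m ≤ n → r k ≤ r m := fun k m hkm hm => by
    rw [hr, hr]
    exact radius_map_mono hρ0 hρ1 (pow_le_pow_right₀ hX1 hkm) (hpos m hm)
  have hcrit : ρ ^ 2 ≤ r 1 ↔ (1 + ρ) ^ (n + 1) ≤ 2 * (1 + ρ ^ 2) ^ n := by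
    rw [hr, sq_le_radius_map_iff hρ0 (hpos 1 hn), pow_one,
      ← pow_le_pow_iff_left₀ hp.le (by positivity) (by omega : n ≠ 0), mul_pow, hXn,
      div_mul_eq_mul_div, le_div_iff₀ hp, ← pow_succ]
  refine ⟨fun k _ hk => hpos k hk, hrn, fun k _ hk => hmono k (k + 1) (by omega) hk, ?_⟩
  rw [← hcrit]
  exact ⟨fun h => (h 1 le_rfl hn).1, fun h k hk hkn =>
    ⟨h.trans (hmono 1 k hk hkn), (hmono k n hkn le_rfl).trans hrn.le⟩⟩
end

section
/- Positivity of the comparison function g: The function g(ρ) = ρ·log(2/(1+ρ)) − (log 2)·log((1+ρ)/(1+ρ²)) − ((3/2)·log 2 − 1)·ρ·log((1+ρ)/(1+ρ²)) is strictly positive for all ρ with 0 < ρ < 1. -/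
/-!
Write `L = log 2`, `a = log (1 + ρ)`, `b = log (1 + ρ²)`. The function equals
`ρ L - L (1 + 3ρ/2) a + (L (1 + 3ρ/2) - ρ) b`, where the coefficient of `a` is negative and that of
`b` is positive, so an upper bound for `a` and a lower bound for `b` suffice.

It vanishes to third order at `0` and to first order at `1`, so bounds exact to these orders are
needed. For `ρ ≤ 7/10` the Padé bound `log (1 + x) ≤ x (6 + x) / (6 + 4 x)`
(`log_one_add_le_pade`) and `2 y / (y + 2) ≤ log (1 + y)` leave `ρ³` times a positive factor.
For `ρ ≥ 7/10` the function is rewritten with `A = a - L` and `B = b - L`, which vanish at `ρ = 1`,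
as `-L (1 + 3ρ/2) A + (L (1 + 3ρ/2) - ρ) B`; then `log t ≤ 2 (t - 1) / (t + 1)` and
`(t - 1 / t) / 2 ≤ log t` on `(0, 1]` leave `1 - ρ` times a positive factor.
-/

/-- An upper Padé bound for the logarithm, exact to third order at `0`. The difference of the two
sides has derivative `4 x³ / ((6 + 4 x)² (1 + x))`. -/
lemma log_one_add_le_pade {x : ℝ} (hx : 0 ≤ x) :
    Real.log (1 + x) ≤ x * (6 + x) / (6 + 4 * x) := by
  have hd : ∀ t : ℝ, 0 ≤ t → HasDerivAt
      (fun t : ℝ => t * (6 + t) / (6 + 4 * t) - Real.log (1 + t))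
      (4 * t ^ 3 / ((6 + 4 * t) ^ 2 * (1 + t))) t := by
    intro t ht
    have h1 : (6 + 4 * t) ≠ 0 := by positivity
    have h2 : (1 + t) ≠ 0 := by positivity
    have hn : HasDerivAt (fun t : ℝ => t * (6 + t)) (1 * (6 + t) + t * 1) t :=
      (hasDerivAt_id t).mul ((hasDerivAt_id t).const_add 6)
    have hm : HasDerivAt (fun t : ℝ => 6 + 4 * t) (4 * 1) t :=
      ((hasDerivAt_id t).const_mul 4).const_add 6
    have hl : HasDerivAt (fun t : ℝ => Real.log (1 + t)) (1 / (1 + t)) t :=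
      ((hasDerivAt_id t).const_add 1).log h2
    refine ((hn.div hm h1).sub hl).congr_deriv ?_
    field_simp
    ring
  have hmono : MonotoneOn (fun t : ℝ => t * (6 + t) / (6 + 4 * t) - Real.log (1 + t))
      (Set.Ici 0) := by
    apply monotoneOn_of_deriv_nonneg (convex_Ici 0)
    · exact fun t ht => (hd t ht).continuousAt.continuousWithinAt
    · intro t ht
      rw [interior_Ici] at ht
      exact (hd t (le_of_lt ht)).differentiableAt.differentiableWithinAt
    · intro t ht
      rw [interior_Ici] at ht
      have ht' : 0 < t := ht
      rw [(hd t ht'.le).deriv]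
      positivity
  have h := hmono (Set.mem_Ici.2 le_rfl) (Set.mem_Ici.2 hx) hx
  simp at h
  exact h

lemma log_le_of_le_one {t : ℝ} (h0 : 0 < t) (h1 : t ≤ 1) :
    Real.log t ≤ 2 * (t - 1) / (t + 1) := by
  have h := Real.le_log_one_add_of_nonneg (x := 1 / t - 1)
    (by rw [sub_nonneg, le_div_iff₀ h0]; linarith)
  have e1 : 1 + (1 / t - 1) = t⁻¹ := by ring
  have e2 : 2 * (1 / t - 1) / (1 / t - 1 + 2) = -(2 * (t - 1) / (t + 1)) := by
    have h3 : 1 / t - 1 + 2 = (t + 1) / t := by field_simp; ring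
    rw [h3]
    field_simp
    ring
  rw [e1, e2, Real.log_inv] at h
  linarith

/-- This is `sinh u ≤ u` for `u = log t ≤ 0`. -/
lemma le_log_of_le_one {t : ℝ} (h0 : 0 < t) (h1 : t ≤ 1) :
    (t - t⁻¹) / 2 ≤ Real.log t := by
  rw [← Real.sinh_log h0]
  exact Real.sinh_le_self_iff.2 (Real.log_nonpos h0.le h1)

theorem comparison_function_pos (ρ : ℝ) (h0 : 0 < ρ) (h1 : ρ < 1) :
    0 < ρ * Real.log (2 / (1 + ρ))
        - Real.log 2 * Real.log ((1 + ρ) / (1 + ρ ^ 2))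
        - ((3 / 2) * Real.log 2 - 1) * ρ * Real.log ((1 + ρ) / (1 + ρ ^ 2)) := by
  have hp : (1 + ρ) ≠ 0 := by positivity
  have hq : (1 + ρ ^ 2) ≠ 0 := by positivity
  have hL1 := Real.log_two_gt_d9
  have hL2 := Real.log_two_lt_d9
  rcases le_total ρ (7 / 10) with hr | hr
  · rw [Real.log_div two_ne_zero hp, Real.log_div hp hq]
    have ha := log_one_add_le_pade h0.le
    have hb := Real.le_log_one_add_of_nonneg (sq_nonneg ρ)
    generalize Real.log (1 + ρ) = a at *
    generalize Real.log (1 + ρ ^ 2) = b at *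
    generalize Real.log 2 = L at *
    have hc : 0 ≤ L * (1 + 3 / 2 * ρ) - ρ := by nlinarith
    have hc' : 0 ≤ L * (1 + 3 / 2 * ρ) := by
      have : 0 < L := by linarith
      positivity
    have k1 := mul_le_mul_of_nonneg_left ha hc'
    have k2 := mul_le_mul_of_nonneg_left hb hc
    have key : 0 < ρ * L - L * (1 + 3 / 2 * ρ) * (ρ * (6 + ρ) / (6 + 4 * ρ))
        + (L * (1 + 3 / 2 * ρ) - ρ) * (2 * ρ ^ 2 / (ρ ^ 2 + 2)) := by
      have e : ρ * L - L * (1 + 3 / 2 * ρ) * (ρ * (6 + ρ) / (6 + 4 * ρ))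
        + (L * (1 + 3 / 2 * ρ) - ρ) * (2 * ρ ^ 2 / (ρ ^ 2 + 2))
        = ρ ^ 3 * (L * (23 + 6 * ρ - 3 / 2 * ρ ^ 2) - (12 + 8 * ρ))
          / ((6 + 4 * ρ) * (ρ ^ 2 + 2)) := by
        field_simp
        ring
      rw [e]
      have : 0 < L * (23 + 6 * ρ - 3 / 2 * ρ ^ 2) - (12 + 8 * ρ) := by
        have hs : 0 ≤ 23 + 6 * ρ - 3 / 2 * ρ ^ 2 := by nlinarith
        nlinarith [mul_le_mul_of_nonneg_right hL1.le hs]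
      positivity
    linarith
  · have ha := log_le_of_le_one (t := (1 + ρ) / 2) (by positivity) (by linarith)
    have hb := le_log_of_le_one (t := (1 + ρ ^ 2) / 2) (by positivity) (by nlinarith)
    rw [Real.log_div hp two_ne_zero] at ha
    rw [Real.log_div hq two_ne_zero] at hb
    rw [Real.log_div two_ne_zero hp, Real.log_div hp hq]
    generalize Real.log (1 + ρ) = a at *
    generalize Real.log (1 + ρ ^ 2) = b at *
    generalize Real.log 2 = L at *
    have hc : 0 ≤ L * (1 + 3 / 2 * ρ) - ρ := by nlinarith
    have hc' : 0 ≤ L * (1 + 3 / 2 * ρ) := by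
      have : 0 < L := by linarith
      positivity
    have k1 := mul_le_mul_of_nonneg_left ha hc'
    have k2 := mul_le_mul_of_nonneg_left hb hc
    have key : 0 < -(L * (1 + 3 / 2 * ρ) * (2 * ((1 + ρ) / 2 - 1) / ((1 + ρ) / 2 + 1)))
        + (L * (1 + 3 / 2 * ρ) - ρ) * (((1 + ρ ^ 2) / 2 - ((1 + ρ ^ 2) / 2)⁻¹) / 2) := by
      have e : -(L * (1 + 3 / 2 * ρ) * (2 * ((1 + ρ) / 2 - 1) / ((1 + ρ) / 2 + 1)))
        + (L * (1 + 3 / 2 * ρ) - ρ) * (((1 + ρ ^ 2) / 2 - ((1 + ρ ^ 2) / 2)⁻¹) / 2)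
        = (1 - ρ) * (4 * L * (2 + 3 * ρ) * (1 + ρ ^ 2)
            - (L * (1 + 3 / 2 * ρ) - ρ) * ((1 + ρ) * (3 + ρ ^ 2) * (ρ + 3)))
          / (4 * (1 + ρ ^ 2) * (ρ + 3)) := by
        have h3 : (1 + ρ) / 2 + 1 = (ρ + 3) / 2 := by ring
        rw [h3]
        field_simp
        ring
      rw [e]
      have : 0 < 4 * L * (2 + 3 * ρ) * (1 + ρ ^ 2)
            - (L * (1 + 3 / 2 * ρ) - ρ) * ((1 + ρ) * (3 + ρ ^ 2) * (ρ + 3)) := by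
        obtain ⟨t, rfl⟩ : ∃ t, ρ = 7 / 10 + t := ⟨ρ - 7 / 10, by ring⟩
        have ht0 : 0 ≤ t := by linarith
        have ht1 : t ≤ 3 / 10 := by linarith
        -- The expression is affine in `L` with negative slope, so `L` may be replaced by `0.6932`.
        have hs : 0 ≤ (1 + 3 / 2 * (7 / 10 + t)) * ((1 + (7 / 10 + t)) * (3 + (7 / 10 + t) ^ 2)
            * ((7 / 10 + t) + 3)) - 4 * (2 + 3 * (7 / 10 + t)) * (1 + (7 / 10 + t) ^ 2) := by
          ring_nf
          nlinarith [pow_nonneg ht0 3, pow_nonneg ht0 4, pow_nonneg ht0 5, pow_nonneg ht0 2]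
        have hm := mul_le_mul_of_nonneg_right (show L ≤ 0.6932 by linarith) hs
        have hP : 0 < 4 * 0.6932 * (2 + 3 * (7 / 10 + t)) * (1 + (7 / 10 + t) ^ 2)
            - (0.6932 * (1 + 3 / 2 * (7 / 10 + t)) - (7 / 10 + t))
              * ((1 + (7 / 10 + t)) * (3 + (7 / 10 + t) ^ 2) * ((7 / 10 + t) + 3)) := by
          ring_nf
          nlinarith [pow_nonneg ht0 3, pow_nonneg ht0 4, pow_nonneg ht0 5, pow_nonneg ht0 2,
            mul_nonneg (pow_nonneg ht0 3) (sub_nonneg.2 ht1),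
            mul_nonneg (pow_nonneg ht0 4) (sub_nonneg.2 ht1)]
        linarith
      have : 0 < 1 - ρ := by linarith
      positivity
    linarith
end

section
/- Lower bound on ρ*_Λ: For every real number Λ > (5/2)·log 2, setting ρ = (log 2)/(Λ − (3/2)·log 2) (so that 0 < ρ < 1), one has (1 + ρ)^Λ < 2·(1 + ρ²)^{Λ−1}. Consequently, for real Λ > 2, the unique root ρ*_Λ ∈ (0,1) of (1+ρ)^Λ = 2(1+ρ²)^{Λ−1} satisfies ρ*_Λ > (log 2)/(Λ − (3/2)·log 2), and hence 1/ρ*_Λ < (Λ − (3/2)·log 2)/log 2 < (Λ−1)/log 2. -/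
/-!
Write `L = log 2`.  With `ρ = L / (Λ − 3L/2)`, that is `Λ = L/ρ + 3L/2`, taking logarithms and
multiplying by `2ρ` turns the inequality `(1+ρ)^Λ < 2(1+ρ²)^(Λ−1)` into `gap ρ > 0`, where
`gap x = L (2x − (2+3x)(log(1+x) − log(1+x²))) − 2x log(1+x²)`.

This function satisfies `gap 0 = gap' 0 = gap 1 = 0`, and its second derivative is
`x N(x) / ((1+x)² (1+x²)²)` for the quartic `N` called `curvNum` below.  All non-constant
coefficients of `N` are negative, while `N 0 > 0 > N 1`, so `gap` is convex on `[0,c]` and concave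
on `[c,1]`, where `N c = 0`.  It is therefore increasing, hence positive, on `(0,c]`, and on `[c,1)`
it lies above the chord joining its positive value at `c` to `0` at `1` (`gap_pos`).

For the statement about a root `ρs`, the same inequality `gap ρs > 0` reads
`(L/ρs + 3L/2) δ < L − log(1+ρs²)`, with `δ = log(1+ρs) − log(1+ρs²) > 0`, while the root equation is
`Λ δ = L − log(1+ρs²)`.  So `L/ρs + 3L/2 < Λ`, and no monotonicity in `ρ` is needed.
-/

namespace RhoStar

open Real

/-- The difference of logarithms of the two sides of `(1+x)^Λ < 2(1+x²)^(Λ−1)` at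
`Λ = log 2 / x + (3/2) log 2`, cleared of its denominator by the factor `2x`. -/
noncomputable def gap (x : ℝ) : ℝ :=
  log 2 * (2 * x - (2 + 3 * x) * (log (1 + x) - log (1 + x ^ 2))) - 2 * x * log (1 + x ^ 2)

/-- The derivative of `gap` on `[0, ∞)`. -/
noncomputable def gapDeriv (x : ℝ) : ℝ :=
  log 2 * (2 - 3 * (log (1 + x) - log (1 + x ^ 2))
    - (2 + 3 * x) * (1 / (1 + x) - 2 * x / (1 + x ^ 2)))
    - 2 * log (1 + x ^ 2) - 4 * x ^ 2 / (1 + x ^ 2)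

/-- The quartic that carries the sign of the second derivative of `gap`. -/
noncomputable def curvNum (x : ℝ) : ℝ :=
  log 2 * (23 + 28 * x + 10 * x ^ 2 + 4 * x ^ 3 + 3 * x ^ 4)
    - (12 + 24 * x + 16 * x ^ 2 + 8 * x ^ 3 + 4 * x ^ 4)

/-- The second derivative of `gap` on `[0, ∞)`. -/
noncomputable def gapDeriv2 (x : ℝ) : ℝ :=
  x * curvNum x / ((1 + x) ^ 2 * (1 + x ^ 2) ^ 2)

lemma hasDerivAt_log_one_add {x : ℝ} (hx : 0 ≤ x) :
    HasDerivAt (fun y : ℝ => log (1 + y)) (1 / (1 + x)) x :=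
  ((hasDerivAt_id x).const_add 1).log (by simp only [id]; positivity)

lemma hasDerivAt_log_one_add_sq (x : ℝ) :
    HasDerivAt (fun y : ℝ => log (1 + y ^ 2)) (2 * x / (1 + x ^ 2)) x := by
  have h := ((hasDerivAt_pow 2 x).const_add 1).log (by positivity)
  simpa using h

lemma hasDerivAt_gap {x : ℝ} (hx : 0 ≤ x) : HasDerivAt gap (gapDeriv x) x := by
  have ha := hasDerivAt_log_one_add hx
  have hb := hasDerivAt_log_one_add_sq x
  have h2 : HasDerivAt (fun y : ℝ => 2 * y) 2 x := by simpa using (hasDerivAt_id x).const_mul 2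
  have h3 : HasDerivAt (fun y : ℝ => 2 + 3 * y) 3 x := by
    simpa using ((hasDerivAt_id x).const_mul 3).const_add 2
  have h := ((h2.sub (h3.mul (ha.sub hb))).const_mul (log 2)).sub (h2.mul hb)
  refine h.congr_deriv ?_
  simp only [gapDeriv, Pi.sub_apply]
  ring

lemma hasDerivAt_gapDeriv {x : ℝ} (hx : 0 ≤ x) : HasDerivAt gapDeriv (gapDeriv2 x) x := by
  have ha := hasDerivAt_log_one_add hx
  have hb := hasDerivAt_log_one_add_sq x
  have hx1 : 1 + x ≠ 0 := by positivity
  have hx2 : 1 + x ^ 2 ≠ 0 := by positivity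
  have h2 : HasDerivAt (fun y : ℝ => 2 * y) 2 x := by simpa using (hasDerivAt_id x).const_mul 2
  have h3 : HasDerivAt (fun y : ℝ => 2 + 3 * y) 3 x := by
    simpa using ((hasDerivAt_id x).const_mul 3).const_add 2
  have h4 : HasDerivAt (fun y : ℝ => 4 * y ^ 2) (8 * x) x :=
    ((hasDerivAt_pow 2 x).const_mul 4).congr_deriv (by norm_num; ring)
  have hp : HasDerivAt (fun y : ℝ => 1 + y) 1 x := (hasDerivAt_id x).const_add 1
  have hq : HasDerivAt (fun y : ℝ => 1 + y ^ 2) (2 * x) x := by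
    simpa using (hasDerivAt_pow 2 x).const_add 1
  have h := ((((((ha.sub hb).const_mul 3).const_sub 2).sub
    (h3.mul (((hasDerivAt_const x (1 : ℝ)).div hp hx1).sub (h2.div hq hx2)))).const_mul
      (log 2)).sub (hb.const_mul 2)).sub (h4.div hq hx2)
  refine h.congr_deriv ?_
  simp only [gapDeriv2, curvNum, Pi.sub_apply, Pi.div_apply]
  field_simp
  ring

lemma curvNum_strictAnti : StrictAntiOn curvNum (Set.Ici 0) := by
  intro x hx y _ hxy
  have hx : 0 ≤ x := hx
  have hL := log_two_lt_d9
  have h2 : x ^ 2 ≤ y ^ 2 := by gcongr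
  have h3 : x ^ 3 ≤ y ^ 3 := by gcongr
  have h4 : x ^ 4 ≤ y ^ 4 := by gcongr
  have e1 : 0 < (24 - 28 * log 2) * (y - x) := mul_pos (by linarith) (by linarith)
  have e2 : 0 ≤ (16 - 10 * log 2) * (y ^ 2 - x ^ 2) := mul_nonneg (by linarith) (by linarith)
  have e3 : 0 ≤ (8 - 4 * log 2) * (y ^ 3 - x ^ 3) := mul_nonneg (by linarith) (by linarith)
  have e4 : 0 ≤ (4 - 3 * log 2) * (y ^ 4 - x ^ 4) := mul_nonneg (by linarith) (by linarith)
  simp only [curvNum]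
  linarith

lemma exists_curvNum_eq_zero : ∃ c ∈ Set.Ioo (0 : ℝ) 1, curvNum c = 0 := by
  have hL := log_two_lt_d9
  have hL' := log_two_gt_d9
  have hc : ContinuousOn curvNum (Set.Icc 0 1) := by unfold curvNum; fun_prop
  refine intermediate_value_Ioo' zero_le_one hc ⟨?_, ?_⟩ <;> simp only [curvNum] <;> linarith

lemma gap_zero : gap 0 = 0 := by simp [gap]

lemma gapDeriv_zero : gapDeriv 0 = 0 := by simp [gapDeriv]

lemma gap_one : gap 1 = 0 := by norm_num [gap]; ring

/-- Convexity on `[0,c]` together with `gap 0 = gap' 0 = 0`. -/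
lemma gap_pos_of_curvNum {c : ℝ} (hc0 : 0 < c) (hc : curvNum c = 0) {x : ℝ} (hx0 : 0 < x)
    (hxc : x ≤ c) : 0 < gap x := by
  have hd : StrictMonoOn gapDeriv (Set.Icc 0 c) := by
    refine strictMonoOn_of_deriv_pos (convex_Icc 0 c)
      (fun y hy => (hasDerivAt_gapDeriv hy.1).continuousAt.continuousWithinAt) fun y hy => ?_
    rw [interior_Icc] at hy
    have hN : 0 < curvNum y := hc ▸ curvNum_strictAnti hy.1.le hc0.le hy.2
    rw [(hasDerivAt_gapDeriv hy.1.le).deriv]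
    have := hy.1
    unfold gapDeriv2
    positivity
  have hg : StrictMonoOn gap (Set.Icc 0 c) := by
    refine strictMonoOn_of_deriv_pos (convex_Icc 0 c)
      (fun y hy => (hasDerivAt_gap hy.1).continuousAt.continuousWithinAt) fun y hy => ?_
    rw [interior_Icc] at hy
    rw [(hasDerivAt_gap hy.1.le).deriv, ← gapDeriv_zero]
    exact hd ⟨le_rfl, hc0.le⟩ ⟨hy.1.le, hy.2.le⟩ hy.1
  have := hg ⟨le_rfl, hc0.le⟩ ⟨hx0.le, hxc⟩ hx0
  rwa [gap_zero] at this

lemma gap_concaveOn {c : ℝ} (hc0 : 0 < c) (hc : curvNum c = 0) :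
    ConcaveOn ℝ (Set.Icc c 1) gap := by
  have hpos : ∀ y ∈ interior (Set.Icc c 1), 0 < y := fun y hy => by
    rw [interior_Icc] at hy; exact hc0.trans hy.1
  refine concaveOn_of_hasDerivWithinAt2_nonpos (convex_Icc c 1) (f' := gapDeriv) (f'' := gapDeriv2)
    (fun y hy => (hasDerivAt_gap (hc0.le.trans hy.1)).continuousAt.continuousWithinAt)
    (fun y hy => (hasDerivAt_gap (hpos y hy).le).hasDerivWithinAt)
    (fun y hy => (hasDerivAt_gapDeriv (hpos y hy).le).hasDerivWithinAt) fun y hy => ?_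
  have hy0 := hpos y hy
  rw [interior_Icc] at hy
  have hN : curvNum y < 0 := hc ▸ curvNum_strictAnti hc0.le hy0.le hy.1
  exact div_nonpos_of_nonpos_of_nonneg (mul_nonpos_of_nonneg_of_nonpos hy0.le hN.le) (by positivity)

theorem gap_pos {x : ℝ} (hx0 : 0 < x) (hx1 : x < 1) : 0 < gap x := by
  obtain ⟨c, ⟨hc0, hc1⟩, hc⟩ := exists_curvNum_eq_zero
  rcases le_or_gt x c with hxc | hcx
  · exact gap_pos_of_curvNum hc0 hc hx0 hxc
  have hgc := gap_pos_of_curvNum hc0 hc hc0 le_rfl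
  have h1c : 0 < 1 - c := by linarith
  -- The weights of `x` as a convex combination of `c` and `1`.
  have ha : 0 ≤ (1 - x) / (1 - c) := div_nonneg (by linarith) h1c.le
  have hb : 0 ≤ (x - c) / (1 - c) := div_nonneg (by linarith) h1c.le
  have h := (gap_concaveOn hc0 hc).2 (Set.left_mem_Icc.2 hc1.le) (Set.right_mem_Icc.2 hc1.le)
    ha hb (by field_simp; ring)
  have hx : ((1 - x) / (1 - c)) • c + ((x - c) / (1 - c)) • (1 : ℝ) = x := by
    simp only [smul_eq_mul]; field_simp; ring
  rw [hx, gap_one] at h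
  simp only [smul_eq_mul, mul_zero, add_zero] at h
  exact (mul_pos (div_pos (by linarith) h1c) hgc).trans_le h

/-- `gap_pos` solved for the exponent `Λ = log 2 / x + (3/2) log 2`. -/
lemma exponent_mul_lt {x : ℝ} (hx0 : 0 < x) (hx1 : x < 1) :
    (log 2 / x + 3 / 2 * log 2) * (log (1 + x) - log (1 + x ^ 2)) < log 2 - log (1 + x ^ 2) := by
  have h := gap_pos hx0 hx1
  have e : gap x = 2 * x * (log 2 - log (1 + x ^ 2)
      - (log 2 / x + 3 / 2 * log 2) * (log (1 + x) - log (1 + x ^ 2))) := by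
    unfold gap; field_simp; ring
  rw [e] at h
  linarith [pos_of_mul_pos_right h (by positivity)]

lemma log_two_mul_rpow (Λ x : ℝ) :
    log (2 * (1 + x ^ 2) ^ (Λ - 1)) = log 2 + (Λ - 1) * log (1 + x ^ 2) := by
  rw [log_mul two_ne_zero (by positivity), log_rpow (by positivity)]

end RhoStar


/-- **Lower bound on `ρ*_Λ`.**
For every real `Λ > (5/2)·log 2`, with `ρ = (log 2)/(Λ − (3/2)·log 2)` one has
`0 < ρ < 1` and `(1+ρ)^Λ < 2(1+ρ²)^{Λ−1}`.  Consequently, for real `Λ > 2`,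
any root `ρ*_Λ ∈ (0,1)` of `(1+ρ)^Λ = 2(1+ρ²)^{Λ−1}` satisfies
`ρ*_Λ > (log 2)/(Λ − (3/2)·log 2)`, hence
`1/ρ*_Λ < (Λ − (3/2)·log 2)/log 2 < (Λ−1)/log 2`. -/
theorem rhoStar_lower_bound :
    (∀ Λ : ℝ, (5 / 2) * Real.log 2 < Λ →
      0 < Real.log 2 / (Λ - (3 / 2) * Real.log 2) ∧
      Real.log 2 / (Λ - (3 / 2) * Real.log 2) < 1 ∧
      (1 + Real.log 2 / (Λ - (3 / 2) * Real.log 2)) ^ Λ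
        < 2 * (1 + (Real.log 2 / (Λ - (3 / 2) * Real.log 2)) ^ 2) ^ (Λ - 1)) ∧
    (∀ Λ : ℝ, 2 < Λ → ∀ ρs ∈ Set.Ioo (0 : ℝ) 1,
      (1 + ρs) ^ Λ = 2 * (1 + ρs ^ 2) ^ (Λ - 1) →
      Real.log 2 / (Λ - (3 / 2) * Real.log 2) < ρs ∧
      1 / ρs < (Λ - (3 / 2) * Real.log 2) / Real.log 2 ∧
      (Λ - (3 / 2) * Real.log 2) / Real.log 2 < (Λ - 1) / Real.log 2) := by
  have hL := Real.log_two_gt_d9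
  refine ⟨fun Λ hΛ => ?_, fun Λ hΛ ρs hρ heq => ?_⟩
  · have hden : 0 < Λ - 3 / 2 * Real.log 2 := by linarith
    have h0 : 0 < Real.log 2 / (Λ - 3 / 2 * Real.log 2) := div_pos (by linarith) hden
    have h1 : Real.log 2 / (Λ - 3 / 2 * Real.log 2) < 1 := (div_lt_one hden).2 (by linarith)
    refine ⟨h0, h1, ?_⟩
    have h := RhoStar.exponent_mul_lt h0 h1
    rw [div_div_cancel₀ (by linarith : Real.log 2 ≠ 0), sub_add_cancel] at h
    generalize Real.log 2 / (Λ - 3 / 2 * Real.log 2) = ρ at *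
    rw [← Real.log_lt_log_iff (by positivity) (by positivity), RhoStar.log_two_mul_rpow,
      Real.log_rpow (by positivity)]
    linarith
  · obtain ⟨h0, h1⟩ := hρ
    have hL2 := Real.log_two_lt_d9
    have hden : 0 < Λ - 3 / 2 * Real.log 2 := by linarith
    have h := RhoStar.exponent_mul_lt h0 h1
    have hδ : Real.log (1 + ρs ^ 2) < Real.log (1 + ρs) :=
      Real.log_lt_log (by positivity) (by nlinarith)
    have hlog := congrArg Real.log heq
    rw [RhoStar.log_two_mul_rpow, Real.log_rpow (by positivity)] at hlog
    have hlt : Real.log 2 / ρs + 3 / 2 * Real.log 2 < Λ :=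
      lt_of_mul_lt_mul_right (by linarith :
        _ < Λ * (Real.log (1 + ρs) - Real.log (1 + ρs ^ 2))) (by linarith)
    have hmul : Real.log 2 < (Λ - 3 / 2 * Real.log 2) * ρs :=
      (div_lt_iff₀ h0).1 (by linarith)
    refine ⟨(div_lt_iff₀ hden).2 (by linarith), ?_, ?_⟩
    · rw [div_lt_div_iff₀ h0 (by linarith)]
      linarith
    · exact div_lt_div_of_pos_right (by linarith) (by linarith)
end

section
/- Comparison of ρ** and ρ*: Let Λ > 1 be a real number and let ρ ∈ (0,1) satisfy (1 + ρ)^Λ = 2·(1 + ρ²)^{Λ−1}. Then 4·(1 − ρ + 2ρ²)^{Λ−1} < (1 + ρ)^{Λ+1}. Consequently, for real Λ > 2, the unique roots ρ*_Λ ∈ (0,1) of (1+ρ)^Λ = 2(1+ρ²)^{Λ−1} and ρ**_Λ ∈ (0,1) of (1+ρ)^{Λ+1} = 4(1−ρ+2ρ²)^{Λ−1} satisfy ρ**_Λ < ρ*_Λ. -/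
/-!
For `ρ ∈ (0,1)` one has `(1+ρ)(1-ρ+2ρ²) < (1+ρ²)²`, the difference being `ρ²(1-ρ)²`. Raising this
to the power `Λ - 1`, multiplying by `4` and using the square of the equation
`(1+ρ)^Λ = 2(1+ρ²)^(Λ-1)` gives `4(1+ρ)^(Λ-1)(1-ρ+2ρ²)^(Λ-1) < (1+ρ)^(2Λ)`, which is the first
claim after division by `(1+ρ)^(Λ-1)` (`bridge_lt`).

For the second claim put `G x = (Λ+1) log (1+x) - (Λ-1) log (1-x+2x²)`. The bridge equation says
`G ρ** = log 4`, the first claim says `G ρ* > log 4`, and `G 1 = log 4`. If `ρ* < ρ**`, the mean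
value theorem on `[ρ*, ρ**]` and Rolle's theorem on `[ρ**, 1]` provide `c < d` in `(0,1)` with
`G' c < 0 = G' d`. But the sign of `G'` is that of the quadratic
`(6-2Λ)x² - (4Λ-2)x + 2Λ`, which is strictly decreasing on `[0,1]` when `Λ > 2`: a contradiction.
-/

theorem bridge_pos (x : ℝ) : 0 < 1 - x + 2 * x ^ 2 := by
  nlinarith [sq_nonneg (4 * x - 1)]

theorem bridge_lt {Λ ρ : ℝ} (hΛ : 1 < Λ) (hρ : ρ ∈ Set.Ioo (0 : ℝ) 1)
    (h : (1 + ρ) ^ Λ = 2 * (1 + ρ ^ 2) ^ (Λ - 1)) :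
    4 * (1 - ρ + 2 * ρ ^ 2) ^ (Λ - 1) < (1 + ρ) ^ (Λ + 1) := by
  obtain ⟨h0, h1⟩ := hρ
  have hq := bridge_pos ρ
  have hp : 0 < 1 + ρ := by linarith
  have hs : 0 < 1 + ρ ^ 2 := by positivity
  have key : (1 + ρ) * (1 - ρ + 2 * ρ ^ 2) < (1 + ρ ^ 2) * (1 + ρ ^ 2) := by
    have : 0 < (ρ * (1 - ρ)) ^ 2 := pow_pos (mul_pos h0 (by linarith)) 2
    nlinarith
  have key2 := Real.rpow_lt_rpow (by positivity) key (show 0 < Λ - 1 by linarith)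
  rw [Real.mul_rpow hp.le hq.le, Real.mul_rpow hs.le hs.le] at key2
  have e : (1 + ρ) ^ (Λ - 1) * (1 + ρ) ^ (Λ + 1) = (1 + ρ) ^ Λ * (1 + ρ) ^ Λ := by
    rw [← Real.rpow_add hp, ← Real.rpow_add hp]
    congr 1
    ring
  refine lt_of_mul_lt_mul_left ?_ (Real.rpow_pos_of_pos hp (Λ - 1)).le
  rw [e, h]
  linarith

/-- The difference of logarithms of the two sides of the bridge equation, up to `log 4`. -/
noncomputable def bridgeLog (Λ x : ℝ) : ℝ :=
  (Λ + 1) * Real.log (1 + x) - (Λ - 1) * Real.log (1 - x + 2 * x ^ 2)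

theorem hasDerivAt_bridgeLog (Λ : ℝ) {x : ℝ} (hx : 0 < x) :
    HasDerivAt (bridgeLog Λ)
      (((6 - 2 * Λ) * x ^ 2 - (4 * Λ - 2) * x + 2 * Λ) / ((1 + x) * (1 - x + 2 * x ^ 2))) x := by
  have hq := bridge_pos x
  have hp : 0 < 1 + x := by linarith
  have d1 : HasDerivAt (fun y : ℝ => 1 + y) 1 x := (hasDerivAt_id x).const_add 1
  have d2 : HasDerivAt (fun y : ℝ => 1 - y + 2 * y ^ 2) (-1 + 2 * (2 * x)) x := by
    refine HasDerivAt.congr_deriv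
      (((hasDerivAt_id' x).const_sub 1).add ((hasDerivAt_pow 2 x).const_mul 2)) ?_
    norm_num
  refine HasDerivAt.congr_deriv
    (((d1.log hp.ne').const_mul (Λ + 1)).sub ((d2.log hq.ne').const_mul (Λ - 1))) ?_
  rw [← mul_div_assoc, ← mul_div_assoc, div_sub_div _ _ hp.ne' hq.ne']
  congr 1
  ring

theorem bridgeLog_one (Λ : ℝ) : bridgeLog Λ 1 = Real.log 4 := by
  have h4 : Real.log 4 = 2 * Real.log 2 := by
    rw [show (4 : ℝ) = 2 ^ 2 by norm_num, Real.log_pow]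
    norm_num
  rw [bridgeLog, h4]
  norm_num
  ring

/-- **Comparison of `ρ**` and `ρ*`.**
If `Λ > 1` and `ρ ∈ (0,1)` with `(1+ρ)^Λ = 2(1+ρ²)^{Λ−1}`, then
`4(1−ρ+2ρ²)^{Λ−1} < (1+ρ)^{Λ+1}`.  Consequently, for real `Λ > 2`, roots
`ρ*_Λ ∈ (0,1)` of `(1+ρ)^Λ = 2(1+ρ²)^{Λ−1}` and `ρ**_Λ ∈ (0,1)` of
`(1+ρ)^{Λ+1} = 4(1−ρ+2ρ²)^{Λ−1}` satisfy `ρ**_Λ < ρ*_Λ`. -/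
theorem rhoDoubleStar_lt_rhoStar :
    (∀ Λ : ℝ, 1 < Λ → ∀ ρ ∈ Set.Ioo (0 : ℝ) 1,
      (1 + ρ) ^ Λ = 2 * (1 + ρ ^ 2) ^ (Λ - 1) →
      4 * (1 - ρ + 2 * ρ ^ 2) ^ (Λ - 1) < (1 + ρ) ^ (Λ + 1)) ∧
    (∀ Λ : ℝ, 2 < Λ → ∀ ρs ∈ Set.Ioo (0 : ℝ) 1, ∀ ρss ∈ Set.Ioo (0 : ℝ) 1,
      (1 + ρs) ^ Λ = 2 * (1 + ρs ^ 2) ^ (Λ - 1) →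
      (1 + ρss) ^ (Λ + 1) = 4 * (1 - ρss + 2 * ρss ^ 2) ^ (Λ - 1) →
      ρss < ρs) := by
  refine ⟨fun Λ hΛ ρ hρ h => bridge_lt hΛ hρ h, ?_⟩
  intro Λ hΛ s hs t ht h1 h2
  have hlt := bridge_lt (by linarith) hs h1
  by_contra! hst
  have hne : s ≠ t := by
    rintro rfl
    exact hlt.ne' h2
  have hst : s < t := lt_of_le_of_ne hst hne
  obtain ⟨hs0, hs1⟩ := hs
  obtain ⟨ht0, ht1⟩ := ht
  have logl : ∀ x : ℝ, 0 < x → Real.log ((1 + x) ^ (Λ + 1)) = (Λ + 1) * Real.log (1 + x) :=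
    fun x hx => Real.log_rpow (by linarith) _
  have logr : ∀ x : ℝ, Real.log (4 * (1 - x + 2 * x ^ 2) ^ (Λ - 1)) =
      Real.log 4 + (Λ - 1) * Real.log (1 - x + 2 * x ^ 2) := fun x => by
    rw [Real.log_mul (by norm_num) (Real.rpow_pos_of_pos (bridge_pos x) _).ne',
      Real.log_rpow (bridge_pos x)]
  have Gs : Real.log 4 < bridgeLog Λ s := by
    have := Real.log_lt_log (mul_pos (by norm_num) (Real.rpow_pos_of_pos (bridge_pos s) _)) hlt
    rw [logl s hs0, logr] at this
    rw [bridgeLog]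
    linarith
  have Gt : bridgeLog Λ t = Real.log 4 := by
    have := congrArg Real.log h2
    rw [logl t ht0, logr] at this
    rw [bridgeLog]
    linarith
  have cont : ∀ a b : ℝ, 0 < a → ContinuousOn (bridgeLog Λ) (Set.Icc a b) := fun a b ha x hx =>
    (hasDerivAt_bridgeLog Λ (ha.trans_le hx.1)).continuousAt.continuousWithinAt
  obtain ⟨c, hc, hcG⟩ := exists_hasDerivAt_eq_slope _ _ hst (cont s t hs0)
    fun x hx => hasDerivAt_bridgeLog Λ (hs0.trans hx.1)
  obtain ⟨d, hd, hdG⟩ := exists_hasDerivAt_eq_zero ht1 (cont t 1 ht0)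
    (Gt.trans (bridgeLog_one Λ).symm) fun x hx => hasDerivAt_bridgeLog Λ (ht0.trans hx.1)
  have hc0 : 0 < c := hs0.trans hc.1
  have hd0 : 0 < d := ht0.trans hd.1
  have hcd : c < d := hc.2.trans hd.1
  have hpos : ∀ x : ℝ, 0 < x → 0 < (1 + x) * (1 - x + 2 * x ^ 2) := fun x hx =>
    mul_pos (by linarith) (bridge_pos x)
  have Nc : (6 - 2 * Λ) * c ^ 2 - (4 * Λ - 2) * c + 2 * Λ < 0 := by
    have : (bridgeLog Λ t - bridgeLog Λ s) / (t - s) < 0 :=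
      div_neg_of_neg_of_pos (by linarith) (by linarith)
    rw [← hcG, div_lt_iff₀ (hpos c hc0), zero_mul] at this
    exact this
  have Nd : (6 - 2 * Λ) * d ^ 2 - (4 * Λ - 2) * d + 2 * Λ = 0 := by
    rwa [div_eq_zero_iff, or_iff_left (hpos d hd0).ne'] at hdG
  -- The values at `c` and `d` differ by `(d - c)` times a factor that is negative on `[0,1]²`.
  have hfac : (6 - 2 * Λ) * (c + d) - (4 * Λ - 2) < 0 := by
    nlinarith [mul_pos (show 0 < Λ - 2 by linarith) (add_pos hc0 hd0), hd.2]
  nlinarith [mul_pos_of_neg_of_neg hfac (show c - d < 0 by linarith)]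
end

section
/- Positivity of the second comparison function g: The function g(ρ) = 2ρ·log(2/(1+ρ)) − (log 2)·log((1+ρ)/(1−ρ+2ρ²)) − (log 2 − 1)·ρ·log((1+ρ)/(1−ρ+2ρ²)) is strictly positive for all ρ with 0 < ρ < 1. -/
/-!
The two logarithms are replaced by rational bounds sharp enough at both endpoints.
Put `x = (1 + ρ) / (1 - ρ + 2ρ²)`. Since `x ≥ 1` on `[0, 1]` with equality at both endpoints, the
Padé bound `log x ≤ (x - 1)(x + 5) / (4x + 2)` (`log_le_pade`), whose error is of order `(x - 1)⁴`,
loses nothing essential at either end. The remaining logarithm satisfies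
`log (2 / (1 + ρ)) = log 2 - log (1 + ρ)`. For `ρ ≤ 1/2` the same Padé bound is applied to
`log (1 + ρ)`, with `log 2` kept symbolic, because the function vanishes to third order at `0`
and the cancellation is exact in `log 2`. For `ρ ≥ 1/2` the bound
`log y ≥ 2(y - 1) / (y + 1)` at `y = 2 / (1 + ρ)` is sharp at `ρ = 1`. In both ranges a polynomial
inequality remains, settled by decimal bounds on `log 2`.
-/

/-- The Padé upper bound of type `[2/1]` for the logarithm at `1`: the difference of the two sides
has derivative `4 (x - 1)³ / (x (4 x + 2)²)`. -/
lemma log_le_pade {x : ℝ} (hx : 1 ≤ x) :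
    Real.log x ≤ (x - 1) * (x + 5) / (4 * x + 2) := by
  have hd : ∀ y : ℝ, 1 ≤ y →
      HasDerivAt (fun y : ℝ => (y - 1) * (y + 5) / (4 * y + 2) - Real.log y)
        (4 * (y - 1) ^ 3 / (y * (4 * y + 2) ^ 2)) y := by
    intro y hy
    have hy0 : y ≠ 0 := by positivity
    have hy2 : 4 * y + 2 ≠ 0 := by positivity
    have h := ((((hasDerivAt_id y).sub_const 1).mul ((hasDerivAt_id y).add_const 5)).div
      (((hasDerivAt_id y).const_mul 4).add_const 2) hy2).sub (Real.hasDerivAt_log hy0)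
    refine h.congr_deriv ?_
    simp only [id, Pi.mul_apply]
    field_simp
    ring
  have hm : MonotoneOn (fun y : ℝ => (y - 1) * (y + 5) / (4 * y + 2) - Real.log y)
      (Set.Ici 1) := by
    refine monotoneOn_of_deriv_nonneg (convex_Ici 1)
      (fun y hy => (hd y hy).continuousAt.continuousWithinAt) ?_ ?_
    · intro y hy
      exact (hd y (interior_subset hy)).differentiableAt.differentiableWithinAt
    · intro y hy
      have hy1 : (1 : ℝ) ≤ y := interior_subset hy
      rw [(hd y hy1).deriv]
      have : 0 ≤ y - 1 := by linarith
      positivity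
  have h := hm (Set.mem_Ici.2 le_rfl) (Set.mem_Ici.2 hx) hx
  norm_num at h
  exact h

/-- **Positivity of the second comparison function `g`.**
The function
`g(ρ) = 2ρ·log(2/(1+ρ)) − (log 2)·log((1+ρ)/(1−ρ+2ρ²))
        − (log 2 − 1)·ρ·log((1+ρ)/(1−ρ+2ρ²))`
is strictly positive for `0 < ρ < 1`. -/
theorem second_comparison_function_pos (ρ : ℝ) (h0 : 0 < ρ) (h1 : ρ < 1) :
    0 < 2 * ρ * Real.log (2 / (1 + ρ))
        - Real.log 2 * Real.log ((1 + ρ) / (1 - ρ + 2 * ρ ^ 2))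
        - (Real.log 2 - 1) * ρ * Real.log ((1 + ρ) / (1 - ρ + 2 * ρ ^ 2)) := by
  have hL1 : 0.693 < Real.log 2 := by linarith [Real.log_two_gt_d9]
  have hL2 : Real.log 2 < 0.694 := by linarith [Real.log_two_lt_d9]
  have hD : 0 < 1 - ρ + 2 * ρ ^ 2 := by nlinarith
  have hE : 0 < 3 + ρ + 2 * ρ ^ 2 := by positivity
  have hA : Real.log ((1 + ρ) / (1 - ρ + 2 * ρ ^ 2)) ≤
      2 * ρ * ((1 - ρ) * (3 - 2 * ρ + 5 * ρ ^ 2) /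
        ((1 - ρ + 2 * ρ ^ 2) * (3 + ρ + 2 * ρ ^ 2))) := by
    have hx : 1 ≤ (1 + ρ) / (1 - ρ + 2 * ρ ^ 2) := by
      rw [le_div_iff₀ hD]; nlinarith
    refine (log_le_pade hx).trans_eq ?_
    have hF : 4 * ((1 + ρ) / (1 - ρ + 2 * ρ ^ 2)) + 2 =
        2 * (3 + ρ + 2 * ρ ^ 2) / (1 - ρ + 2 * ρ ^ 2) := by
      obtain ⟨D, hDe⟩ : ∃ D, 1 - ρ + 2 * ρ ^ 2 = D := ⟨_, rfl⟩
      rw [hDe] at hD ⊢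
      field_simp
      rw [← hDe]
      ring
    rw [hF]
    obtain ⟨D, hDe⟩ : ∃ D, 1 - ρ + 2 * ρ ^ 2 = D := ⟨_, rfl⟩
    rw [hDe] at hD ⊢
    field_simp
    rw [← hDe]
    ring
  have hlog : Real.log (2 / (1 + ρ)) = Real.log 2 - Real.log (1 + ρ) :=
    Real.log_div (by norm_num) (by positivity)
  set L := Real.log 2
  set A := Real.log ((1 + ρ) / (1 - ρ + 2 * ρ ^ 2))
  set M := Real.log (2 / (1 + ρ))
  have hc : 0 < L + (L - 1) * ρ := by nlinarith
  suffices h : (L + (L - 1) * ρ) * ((1 - ρ) * (3 - 2 * ρ + 5 * ρ ^ 2) /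
        ((1 - ρ + 2 * ρ ^ 2) * (3 + ρ + 2 * ρ ^ 2))) < M by
    have h2 := mul_le_mul_of_nonneg_left hA hc.le
    have h3 := mul_lt_mul_of_pos_left h (show 0 < 2 * ρ by positivity)
    linarith
  rcases le_total ρ (1 / 2) with hρ | hρ
  · have hl : Real.log (1 + ρ) ≤ ρ * (ρ + 6) / (4 * ρ + 6) := by
      refine (log_le_pade (by linarith)).trans_eq ?_
      congr 1 <;> ring
    suffices h : (L + (L - 1) * ρ) * ((1 - ρ) * (3 - 2 * ρ + 5 * ρ ^ 2) /
        ((1 - ρ + 2 * ρ ^ 2) * (3 + ρ + 2 * ρ ^ 2))) < L - ρ * (ρ + 6) / (4 * ρ + 6) by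
      linarith
    -- After clearing denominators, a factor `ρ²` splits off and the cofactor increases with `L`.
    have hq : 0 < L * ((5 - 2 * ρ + 9 * ρ ^ 2) * (4 * ρ + 6))
        - (9 + 18 * ρ + 9 * ρ ^ 2 + 44 * ρ ^ 3 + 4 * ρ ^ 4) := by
      have hk : 0 < (5 - 2 * ρ + 9 * ρ ^ 2) * (4 * ρ + 6) := by
        have : 0 < 5 - 2 * ρ + 9 * ρ ^ 2 := by nlinarith
        positivity
      have h3 : ρ ^ 3 ≤ ρ ^ 2 / 2 := by nlinarith [sq_nonneg ρ]
      have h4 : ρ ^ 4 ≤ ρ ^ 2 / 4 := by nlinarith [sq_nonneg ρ]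
      nlinarith [mul_lt_mul_of_pos_right hL1 hk, sq_nonneg ρ]
    rw [← sub_pos]
    have : L - ρ * (ρ + 6) / (4 * ρ + 6) - (L + (L - 1) * ρ) *
        ((1 - ρ) * (3 - 2 * ρ + 5 * ρ ^ 2) /
          ((1 - ρ + 2 * ρ ^ 2) * (3 + ρ + 2 * ρ ^ 2))) =
        ρ ^ 2 * (L * ((5 - 2 * ρ + 9 * ρ ^ 2) * (4 * ρ + 6))
          - (9 + 18 * ρ + 9 * ρ ^ 2 + 44 * ρ ^ 3 + 4 * ρ ^ 4)) /
        ((4 * ρ + 6) * ((1 - ρ + 2 * ρ ^ 2) * (3 + ρ + 2 * ρ ^ 2))) := by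
      obtain ⟨D, hDe⟩ : ∃ D, 1 - ρ + 2 * ρ ^ 2 = D := ⟨_, rfl⟩
      rw [hDe] at hD ⊢
      field_simp
      rw [← hDe]
      ring
    rw [this]
    positivity
  · have hM : (1 - ρ) * (2 / (3 + ρ)) ≤ M := by
      have h := Real.le_log_one_add_of_nonneg (x := (1 - ρ) / (1 + ρ))
        (div_nonneg (by linarith) (by linarith))
      have e1 : 1 + (1 - ρ) / (1 + ρ) = 2 / (1 + ρ) := by field_simp; ring
      have e2 : (1 - ρ) / (1 + ρ) + 2 = (3 + ρ) / (1 + ρ) := by field_simp; ring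
      rw [e1, e2] at h
      refine le_trans (le_of_eq ?_) h
      field_simp
    refine lt_of_lt_of_le ?_ hM
    have hN : 0 < 3 - 2 * ρ + 5 * ρ ^ 2 := by nlinarith
    have key : (L + (L - 1) * ρ) * (3 - 2 * ρ + 5 * ρ ^ 2) /
        ((1 - ρ + 2 * ρ ^ 2) * (3 + ρ + 2 * ρ ^ 2)) < 2 / (3 + ρ) := by
      rw [div_lt_div_iff₀ (by positivity) (by positivity)]
      -- On `[1/2, 1]` the linear factor `L + (L - 1) ρ` is at most its value at `ρ = 1/2`.
      have hc2 : L + (L - 1) * ρ ≤ 0.541 := by nlinarith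
      have h5 : (L + (L - 1) * ρ) * ((3 - 2 * ρ + 5 * ρ ^ 2) * (3 + ρ)) ≤
          0.541 * ((3 - 2 * ρ + 5 * ρ ^ 2) * (3 + ρ)) :=
        mul_le_mul_of_nonneg_right hc2 (by positivity)
      nlinarith [sq_nonneg (ρ ^ 2 - 1 / 4), sq_nonneg (ρ - 1 / 2),
        mul_nonneg h0.le (sq_nonneg (ρ - 1 / 2))]
    have := mul_lt_mul_of_pos_left key (sub_pos.2 h1)
    refine lt_of_eq_of_lt ?_ this
    ring
end

section
/- Lower bound on ρ**_Λ: For every real number Λ > 2·log 2, setting ρ = (log 2)/(Λ − log 2) (so that 0 < ρ < 1), one has (1 + ρ)^{Λ+1} < 4·(1 − ρ + 2ρ²)^{Λ−1}. Consequently, for real Λ > 2, the unique root ρ**_Λ ∈ (0,1) of (1+ρ)^{Λ+1} = 4(1−ρ+2ρ²)^{Λ−1} satisfies ρ**_Λ > (log 2)/(Λ − log 2), and hence 1/ρ**_Λ < (Λ − log 2)/log 2. -/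
/-!
Write `L = log 2`, `A = log (1 + ρ)`, `B = log (1 - ρ + 2ρ²)`. Taking logarithms, the inequality at
`Λ = L (1 + ρ) / ρ` becomes
`ρ (A + B) < L (2ρ - (1 + ρ) (A - B))` for `0 < ρ < 1`, which degenerates to equality at both ends
of the interval.

The bound `log u ≤ (u - u⁻¹) / 2` for `u ≥ 1`, applied to `u = (1 + ρ) / (1 - ρ + 2ρ²)`, gives
`2ρ - (1 + ρ) (A - B) ≥ 2ρ³ (1 + ρ) / (1 - ρ + 2ρ²)`. As
`y := (1 + ρ) (1 - ρ + 2ρ²) = 1 + ρ² + 2ρ³` satisfies `A + B = log y`, it remains to see that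
`y log y < 2 L ρ² (1 + ρ)²` (`mul_log_lt`). For `ρ ≤ 1/2` this follows from `log y ≤ y - 1`; for
`ρ ≥ 1/2` one needs a bound that is exact at `y = 4`, and
`log (4 / y) ≥ 2 (4 - y) / (4 + y)` suffices.

For the statement on roots, no uniqueness is needed: with `ρ` fixed, the difference of the
logarithms of the two sides is affine in `Λ` with slope `B - A < 0`, so a `Λ` at which they agree
must exceed `L (1 + ρ) / ρ`.
-/

lemma log_le_half_sub_inv {u : ℝ} (hu : 1 ≤ u) : Real.log u ≤ (u - u⁻¹) / 2 := by
  rw [← Real.sinh_log (by linarith)]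
  exact Real.self_le_sinh_iff.2 (Real.log_nonneg hu)

/-- The one-variable inequality left over after the rational bound on
`log ((1 + ρ) / (1 - ρ + 2ρ²))`; both sides agree at `ρ = 0` and at `ρ = 1`. -/
lemma mul_log_lt {ρ : ℝ} (h0 : 0 < ρ) (h1 : ρ < 1) :
    (1 + ρ ^ 2 + 2 * ρ ^ 3) * Real.log (1 + ρ ^ 2 + 2 * ρ ^ 3)
      < 2 * Real.log 2 * ρ ^ 2 * (1 + ρ) ^ 2 := by
  have hL1 := Real.log_two_gt_d9
  have hL2 := Real.log_two_lt_d9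
  set L := Real.log 2 with hL
  obtain ⟨y, hy⟩ : ∃ y, y = 1 + ρ ^ 2 + 2 * ρ ^ 3 := ⟨_, rfl⟩
  have hypos : 0 < y := by rw [hy]; positivity
  rw [← hy]
  rcases le_total ρ (1 / 2) with h | h
  · have hlog := Real.log_le_sub_one_of_pos hypos
    have hpoly : y * (1 + 2 * ρ) < 2 * L * (1 + ρ) ^ 2 := by
      have h2 : y * (1 + 2 * ρ) < 1.386 * (1 + ρ) ^ 2 := by
        rw [hy]
        have e1 : ρ ^ 2 ≤ ρ / 2 := by nlinarith
        have e2 : ρ ^ 3 ≤ ρ ^ 2 / 2 := by nlinarith [sq_nonneg ρ]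
        have e3 : ρ ^ 4 ≤ ρ ^ 3 / 2 := by nlinarith [pow_pos h0 3]
        nlinarith
      nlinarith [sq_nonneg (1 + ρ)]
    calc y * Real.log y ≤ y * (y - 1) := by gcongr
      _ = ρ ^ 2 * (y * (1 + 2 * ρ)) := by rw [hy]; ring
      _ < ρ ^ 2 * (2 * L * (1 + ρ) ^ 2) := by gcongr
      _ = _ := by ring
  · have hy4 : 4 - y = (1 - ρ) * (2 * ρ ^ 2 + 3 * ρ + 3) := by rw [hy]; ring
    have hle : y ≤ 4 := by
      have : 0 ≤ 4 - y := by
        rw [hy4]; exact mul_nonneg (by linarith) (by positivity)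
      linarith
    have hlog := Real.le_log_one_add_of_nonneg (x := 4 / y - 1)
      (by rw [sub_nonneg, le_div_iff₀ hypos]; linarith)
    have e4 : Real.log 4 = 2 * L := by
      rw [hL, show (4 : ℝ) = 2 ^ 2 by norm_num, Real.log_pow]; norm_num
    rw [add_sub_cancel, Real.log_div (by norm_num) hypos.ne', e4] at hlog
    have e5 : 2 * (4 / y - 1) / (4 / y - 1 + 2) = 2 * (4 - y) / (y + 4) := by
      rw [div_eq_div_iff (by
        have : 0 < 4 / y := by positivity
        linarith) (by linarith)]
      field_simp
      ring
    rw [e5] at hlog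
    -- What remains after cancelling the common factor `2 (1 - ρ)`.
    have hpoly : L * ((1 + ρ) * (1 + ρ ^ 2) * (y + 4)) < y * (2 * ρ ^ 2 + 3 * ρ + 3) := by
      have h2 : 0.694 * ((1 + ρ) * (1 + ρ ^ 2) * (y + 4)) < y * (2 * ρ ^ 2 + 3 * ρ + 3) := by
        rw [hy]
        obtain ⟨t, ht⟩ : ∃ t, t = ρ - 1 / 2 := ⟨_, rfl⟩
        have hρ : ρ = t + 1 / 2 := by linarith
        have t0 : 0 ≤ t := by linarith
        have t1 : t ≤ 1 / 2 := by linarith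
        rw [hρ]
        have e2 : t ^ 3 * t ^ 2 ≤ t ^ 3 * (1 / 4) := by gcongr; nlinarith
        have e3 : t ^ 3 * t ^ 3 ≤ t ^ 3 * (1 / 8) := by
          gcongr
          calc t ^ 3 ≤ (1 / 2 : ℝ) ^ 3 := by gcongr
            _ = 1 / 8 := by norm_num
        have p2 : 0 ≤ t ^ 2 := by positivity
        have p3 : 0 ≤ t ^ 3 := by positivity
        have p4 : 0 ≤ t ^ 4 := by positivity
        have p5 : 0 ≤ t ^ 5 := by positivity
        nlinarith
      have h3 : 0 < (1 + ρ) * (1 + ρ ^ 2) * (y + 4) := by positivity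
      nlinarith
    have key : 2 * L * (1 - ρ ^ 4) * (y + 4) < y * (2 * (4 - y)) := by
      have := mul_lt_mul_of_pos_left hpoly (show 0 < 2 * (1 - ρ) by linarith)
      rw [hy4]
      linarith
    have key2 : 2 * L * (1 - ρ ^ 4) < y * (2 * (4 - y) / (y + 4)) := by
      rw [← mul_div_assoc, lt_div_iff₀ (by linarith)]
      exact key
    have key3 := mul_le_mul_of_nonneg_left hlog hypos.le
    have e6 : 2 * L * ρ ^ 2 * (1 + ρ) ^ 2 = 2 * L * y - 2 * L * (1 - ρ ^ 4) := by
      rw [hy]; ring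
    rw [e6]
    linarith

/-- The logarithmic form of the inequality, with `Λ` tied to `ρ` by `Λ ρ = log 2 (1 + ρ)`. -/
lemma log_gap {ρ Λ : ℝ} (h0 : 0 < ρ) (h1 : ρ < 1) (hΛ : Λ * ρ = Real.log 2 * (1 + ρ)) :
    (Λ + 1) * Real.log (1 + ρ)
      < 2 * Real.log 2 + (Λ - 1) * Real.log (1 - ρ + 2 * ρ ^ 2) := by
  have hn : 0 < 1 + ρ := by linarith
  have hd : 0 < 1 - ρ + 2 * ρ ^ 2 := by nlinarith
  have hLpos := Real.log_pos one_lt_two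
  have hm := mul_log_lt h0 h1
  have hyd : 1 + ρ ^ 2 + 2 * ρ ^ 3 = (1 + ρ) * (1 - ρ + 2 * ρ ^ 2) := by ring
  have hu := log_le_half_sub_inv (u := (1 + ρ) / (1 - ρ + 2 * ρ ^ 2))
    (by rw [le_div_iff₀ hd]; nlinarith)
  rw [hyd, Real.log_mul hn.ne' hd.ne'] at hm
  rw [Real.log_div hn.ne' hd.ne'] at hu
  set A := Real.log (1 + ρ)
  set B := Real.log (1 - ρ + 2 * ρ ^ 2)
  set L := Real.log 2
  have hm' : A + B < 2 * L * ρ ^ 2 * (1 + ρ) / (1 - ρ + 2 * ρ ^ 2) := by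
    rw [lt_div_iff₀ hd]
    refine lt_of_mul_lt_mul_left ?_ hn.le
    linarith
  have hc : 2 * ρ ^ 3 * (1 + ρ) / (1 - ρ + 2 * ρ ^ 2) ≤ 2 * ρ - (1 + ρ) * (A - B) := by
    have := mul_le_mul_of_nonneg_left hu hn.le
    have e : (1 + ρ) * (((1 + ρ) / (1 - ρ + 2 * ρ ^ 2)
        - ((1 + ρ) / (1 - ρ + 2 * ρ ^ 2))⁻¹) / 2)
        = 2 * ρ - 2 * ρ ^ 3 * (1 + ρ) / (1 - ρ + 2 * ρ ^ 2) := by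
      have hd' := hd.ne'
      obtain ⟨d, hdd⟩ : ∃ d, d = 1 - ρ + 2 * ρ ^ 2 := ⟨_, rfl⟩
      rw [← hdd] at hd' ⊢
      field_simp
      rw [hdd]
      ring
    linarith
  have h3 := mul_lt_mul_of_pos_left hm' h0
  have h4 := mul_le_mul_of_nonneg_left hc hLpos.le
  have e : ρ * (2 * L * ρ ^ 2 * (1 + ρ) / (1 - ρ + 2 * ρ ^ 2))
      = L * (2 * ρ ^ 3 * (1 + ρ) / (1 - ρ + 2 * ρ ^ 2)) := by ring
  have h5 : ρ * (A + B) < L * (2 * ρ - (1 + ρ) * (A - B)) := by linarith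
  refine lt_of_mul_lt_mul_left ?_ h0.le
  linear_combination h5 + (A - B) * hΛ

/-- **Lower bound on `ρ**_Λ`.**
For every real `Λ > 2·log 2`, with `ρ = (log 2)/(Λ − log 2)` one has
`0 < ρ < 1` and `(1+ρ)^{Λ+1} < 4(1−ρ+2ρ²)^{Λ−1}`.  Consequently, for real
`Λ > 2`, any root `ρ**_Λ ∈ (0,1)` of `(1+ρ)^{Λ+1} = 4(1−ρ+2ρ²)^{Λ−1}`
satisfies `ρ**_Λ > (log 2)/(Λ − log 2)`, hence
`1/ρ**_Λ < (Λ − log 2)/log 2`. -/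
theorem rhoDoubleStar_lower_bound :
    (∀ Λ : ℝ, 2 * Real.log 2 < Λ →
      0 < Real.log 2 / (Λ - Real.log 2) ∧
      Real.log 2 / (Λ - Real.log 2) < 1 ∧
      (1 + Real.log 2 / (Λ - Real.log 2)) ^ (Λ + 1)
        < 4 * (1 - Real.log 2 / (Λ - Real.log 2)
              + 2 * (Real.log 2 / (Λ - Real.log 2)) ^ 2) ^ (Λ - 1)) ∧
    (∀ Λ : ℝ, 2 < Λ → ∀ ρss ∈ Set.Ioo (0 : ℝ) 1,
      (1 + ρss) ^ (Λ + 1) = 4 * (1 - ρss + 2 * ρss ^ 2) ^ (Λ - 1) →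
      Real.log 2 / (Λ - Real.log 2) < ρss ∧
      1 / ρss < (Λ - Real.log 2) / Real.log 2) := by
  have hLpos := Real.log_pos one_lt_two
  have hL1 := Real.log_two_lt_d9
  have e4 : Real.log 4 = 2 * Real.log 2 := by
    rw [show (4 : ℝ) = 2 ^ 2 by norm_num, Real.log_pow]; norm_num
  constructor
  · intro Λ hΛ
    have hs : 0 < Λ - Real.log 2 := by linarith
    have h0 : 0 < Real.log 2 / (Λ - Real.log 2) := by positivity
    have h1 : Real.log 2 / (Λ - Real.log 2) < 1 := by rw [div_lt_one hs]; linarith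
    refine ⟨h0, h1, ?_⟩
    have hrel : Λ * (Real.log 2 / (Λ - Real.log 2))
        = Real.log 2 * (1 + Real.log 2 / (Λ - Real.log 2)) := by
      field_simp
      ring
    have hg := log_gap h0 h1 hrel
    set ρ := Real.log 2 / (Λ - Real.log 2)
    have hn : 0 < 1 + ρ := by linarith
    have hd : 0 < 1 - ρ + 2 * ρ ^ 2 := by nlinarith
    rw [← Real.log_lt_log_iff (by positivity) (by positivity),
      Real.log_mul (by norm_num) (by positivity), Real.log_rpow hn, Real.log_rpow hd, e4]
    exact hg
  · rintro Λ hΛ ρ ⟨h0, h1⟩ heq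
    have hs : 0 < Λ - Real.log 2 := by linarith
    have hn : 0 < 1 + ρ := by linarith
    have hd : 0 < 1 - ρ + 2 * ρ ^ 2 := by nlinarith
    have hlog := congrArg Real.log heq
    rw [Real.log_mul (by norm_num) (by positivity), Real.log_rpow hn, Real.log_rpow hd, e4] at hlog
    have hg := log_gap (Λ := Real.log 2 * (1 + ρ) / ρ) h0 h1 (by field_simp)
    have hAB : Real.log (1 - ρ + 2 * ρ ^ 2) < Real.log (1 + ρ) :=
      Real.log_lt_log hd (by nlinarith)
    have hlt : Real.log 2 * (1 + ρ) / ρ < Λ := by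
      refine lt_of_mul_lt_mul_right (a := Real.log (1 + ρ) - Real.log (1 - ρ + 2 * ρ ^ 2)) ?_
        (by linarith)
      linarith
    rw [div_lt_iff₀ h0] at hlt
    constructor
    · rw [div_lt_iff₀ hs]; linarith
    · rw [div_lt_div_iff₀ h0 hLpos]; linarith
end
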